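/- Let W be the group of ℤ-linear automorphisms g of V = (Fin 7 → ℤ) satisfying ⟨g x, g y⟩ = ⟨x, y⟩ for all x, y ∈ V and g K = K. Then W is a finite group of order 51840. -/

import Mathlib

/-- The symmetric bilinear form of signature (1,6) on the lattice `Fin 7 → ℤ`,
modelling the Picard lattice of a smooth cubic surface. -/
def B (x y : Fin 7 → ℤ) : ℤ :=
  x 0 * y 0 - x 1 * y 1 - x 2 * y 2 - x 3 * y 3 - x 4 * y 4 - x 5 * y 5 - x 6 * y 6

/-- The canonical class `K = (-3,1,1,1,1,1,1)`. -/
def K : Fin 7 → ℤ := ![-3, 1, 1, 1, 1, 1, 1]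

/-- The set of ℤ-linear automorphisms of the lattice preserving the form and fixing `K`:
the Weyl group of `E₆`. -/
def Wset : Set ((Fin 7 → ℤ) ≃ₗ[ℤ] (Fin 7 → ℤ)) :=
  {g | (∀ x y, B (g x) (g y) = B x y) ∧ g K = K}

/-!
Call `h ∈ ℤ⁷` a planar class if `⟨h, h⟩ = 1` and `⟨h, K⟩ = -3`: geometrically, `h` is the pullback
of the class of a line under one of the 72 ways of blowing the cubic surface down to the plane. The
isometries fixing `K` act transitively on planar classes: as long as the degree `h 0` exceeds `1`,
some planar class `h'` of smaller degree differs from `h` by a root, and the reflection in `h - h'`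
carries `h` to `h'`; the descent ends at the first vector `e₀` of the standard basis. An isometry
fixing `e₀` and `K` permutes the six exceptional classes `e₁, …, e₆`, and every permutation occurs,
so the stabilizer of `e₀` has order `6!`, and the group has order `72 · 6! = 51840`.
-/

open LinearMap (IsReflective)

section Reflection

variable {R M : Type*} [CommRing R] [AddCommGroup M] [Module R M] {Q : M →ₗ[R] M →ₗ[R] R}
  {x y : M}

theorem reflection_apply_of_apply_eq_zero (hx : IsReflective Q x) (h : Q x y = 0) :
    Module.reflection (hx.coroot_apply_self Q) y = y := by
  have hcoroot : hx.coroot Q y = 0 := hx.regular.left <| by simp [h]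
  rw [Module.reflection_apply, hcoroot, zero_smul, sub_zero]

theorem reflection_sub_apply_left (hQ : Q.IsSymm) (hxy : IsReflective Q (x - y))
    (h : Q x x = Q y y) : Module.reflection (hxy.coroot_apply_self Q) x = y := by
  have hcomm : Q y x = Q x y := hQ.eq y x
  have hcoroot : hxy.coroot Q x = 1 := hxy.regular.left <| by
    beta_reduce
    rw [IsReflective.apply_self_mul_coroot_apply]
    simp only [map_sub, LinearMap.sub_apply]
    linear_combination h - hcomm
  rw [Module.reflection_apply, hcoroot, one_smul, sub_sub_cancel]

end Reflection

theorem single_succ_injective (n : ℕ) :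
    Function.Injective fun i : Fin n => (Pi.single i.succ 1 : Fin (n + 1) → ℤ) :=
  (Pi.linearIndependent_single_one (Fin (n + 1)) ℤ).injective.comp (Fin.succ_injective n)

theorem exists_eq_single_of_sum_eq_one_of_sum_sq_eq_one {ι : Type*} [Fintype ι] [DecidableEq ι]
    {x : ι → ℤ} (hsum : ∑ i, x i = 1) (hsq : ∑ i, x i ^ 2 = 1) : ∃ i, x = Pi.single i 1 := by
  obtain ⟨i, -, hi⟩ : ∃ i ∈ Finset.univ, x i ≠ 0 :=
    Finset.exists_ne_zero_of_sum_ne_zero (by rw [hsum]; exact one_ne_zero)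
  have hzero : ∀ j, j ≠ i → x j = 0 := by
    intro j hj
    have hle : x i ^ 2 + x j ^ 2 ≤ 1 :=
      hsq ▸ Finset.add_le_sum (fun k _ => sq_nonneg (x k)) (Finset.mem_univ i)
        (Finset.mem_univ j) hj.symm
    have hpos : 0 < x i ^ 2 := by positivity
    exact pow_eq_zero_iff two_ne_zero |>.1 (le_antisymm (by linarith) (sq_nonneg (x j)))
  have hone : x i = 1 := by rw [← hsum, Fintype.sum_eq_single i hzero]
  refine ⟨i, funext fun j => ?_⟩
  obtain rfl | hj := eq_or_ne j i
  · rw [hone, Pi.single_eq_same]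
  · rw [hzero j hj, Pi.single_eq_of_ne hj]

/-- The form `B` bundled as a bilinear form. -/
def intersectionForm : LinearMap.BilinForm ℤ (Fin 7 → ℤ) :=
  LinearMap.mk₂ ℤ B (fun _ _ _ => by simp only [B, Pi.add_apply]; ring)
    (fun _ _ _ => by simp only [B, Pi.smul_apply, smul_eq_mul]; ring)
    (fun _ _ _ => by simp only [B, Pi.add_apply]; ring)
    (fun _ _ _ => by simp only [B, Pi.smul_apply, smul_eq_mul]; ring)

theorem intersectionForm_apply (x y : Fin 7 → ℤ) : intersectionForm x y = B x y := rfl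

theorem B_comm (x y : Fin 7 → ℤ) : B x y = B y x := by
  simp only [B]; ring

theorem intersectionForm_isSymm : LinearMap.IsSymm intersectionForm := ⟨B_comm⟩

theorem B_eq_sub_sum (x y : Fin 7 → ℤ) : B x y = x 0 * y 0 - ∑ i : Fin 6, x i.succ * y i.succ := by
  simp only [B, Fin.sum_univ_six, Fin.reduceSucc, Fin.succ_zero_eq_one, Fin.succ_one_eq_two]
  ring

theorem K_succ (i : Fin 6) : K i.succ = 1 := by
  revert i; decide

theorem B_K_right (x : Fin 7 → ℤ) : B x K = -3 * x 0 - ∑ i : Fin 6, x i.succ := by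
  simp only [B_eq_sub_sum, K_succ, mul_one, show K 0 = -3 from rfl, mul_comm (-3)]

theorem B_single_succ_self (i : Fin 6) : B (Pi.single i.succ 1) (Pi.single i.succ 1) = -1 := by
  revert i; decide

theorem B_single_succ_K (i : Fin 6) : B (Pi.single i.succ 1) K = -1 := by
  revert i; decide

/-- The group of isometries fixing `K`. -/
def weylGroup : Subgroup ((Fin 7 → ℤ) ≃ₗ[ℤ] (Fin 7 → ℤ)) where
  carrier := Wset
  one_mem' := ⟨fun _ _ => rfl, rfl⟩
  mul_mem' := fun {a b} ha hb =>
    ⟨fun x y => (ha.1 (b x) (b y)).trans (hb.1 x y), (congrArg a hb.2).trans ha.2⟩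
  inv_mem' := fun {a} ha =>
    ⟨fun x y => by
      rw [← ha.1]
      exact congrArg₂ B (a.apply_symm_apply x) (a.apply_symm_apply y),
    a.symm_apply_eq.2 ha.2.symm⟩

/-- Classes with the numerical invariants of the pullback of a line under a blow-down of the cubic
surface to the plane. -/
def planarClasses : Set (Fin 7 → ℤ) :=
  {h | B h h = 1 ∧ B h K = -3}

theorem single_zero_mem_planarClasses : Pi.single 0 1 ∈ planarClasses := by
  constructor <;> decide

section Enumeration

variable {h : Fin 7 → ℤ}

theorem sum_of_mem_planarClasses (hh : h ∈ planarClasses) :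
    ∑ i : Fin 6, h i.succ = 3 - 3 * h 0 := by
  linarith [B_K_right h, hh.2]

theorem sum_sq_of_mem_planarClasses (hh : h ∈ planarClasses) :
    ∑ i : Fin 6, h i.succ ^ 2 = h 0 ^ 2 - 1 := by
  have hself := hh.1
  simp only [B_eq_sub_sum, ← sq] at hself
  linarith

theorem degree_mem_Icc_of_mem_planarClasses (hh : h ∈ planarClasses) :
    h 0 ∈ Set.Icc 1 5 := by
  have hCS := sq_sum_le_card_mul_sum_sq (s := Finset.univ) (f := fun i : Fin 6 => h i.succ)
  rw [sum_of_mem_planarClasses hh, sum_sq_of_mem_planarClasses hh, Finset.card_univ,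
    Fintype.card_fin] at hCS
  push_cast at hCS
  have hquad : (h 0 - 1) * (h 0 - 5) ≤ 0 := by linarith
  constructor <;> nlinarith [hquad]

theorem coord_mem_Icc_of_mem_planarClasses (hh : h ∈ planarClasses) (i : Fin 6) :
    h i.succ ∈ Set.Icc (-2) 0 := by
  have hCS := sq_sum_le_card_mul_sum_sq (s := Finset.univ.erase i) (f := fun j : Fin 6 => h j.succ)
  rw [Finset.sum_erase_eq_sub (Finset.mem_univ i), Finset.sum_erase_eq_sub (Finset.mem_univ i),
    sum_of_mem_planarClasses hh, sum_sq_of_mem_planarClasses hh,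
    Finset.card_erase_of_mem (Finset.mem_univ i), Finset.card_univ, Fintype.card_fin] at hCS
  push_cast at hCS
  obtain ⟨hlo, hhi⟩ := degree_mem_Icc_of_mem_planarClasses hh
  have hquad : 3 * h i.succ ^ 2 + 3 * (h 0 - 1) * h i.succ + (h 0 - 1) * (2 * h 0 - 7) ≤ 0 := by
    linarith
  clear hCS
  generalize h 0 = d at hlo hhi hquad
  constructor <;> interval_cases d <;> nlinarith

theorem planarClasses_eq_filter_Icc :
    planarClasses = ({h ∈ Finset.Icc ![1, -2, -2, -2, -2, -2, -2] ![5, 0, 0, 0, 0, 0, 0] |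
      B h h = 1 ∧ B h K = -3} : Finset (Fin 7 → ℤ)) := by
  ext h
  rw [Finset.mem_coe, Finset.mem_filter, Finset.mem_Icc]
  refine ⟨fun hh => ⟨?_, hh⟩, And.right⟩
  have hdeg := degree_mem_Icc_of_mem_planarClasses hh
  have hcoord := coord_mem_Icc_of_mem_planarClasses hh
  constructor <;> intro i <;> fin_cases i
  exacts [hdeg.1, (hcoord 0).1, (hcoord 1).1, (hcoord 2).1, (hcoord 3).1, (hcoord 4).1,
    (hcoord 5).1, hdeg.2, (hcoord 0).2, (hcoord 1).2, (hcoord 2).2, (hcoord 3).2, (hcoord 4).2,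
    (hcoord 5).2]

theorem ncard_planarClasses : planarClasses.ncard = 72 := by
  rw [planarClasses_eq_filter_Icc, Set.ncard_coe_finset]
  decide +kernel

-- `B h h' = 2` says that `h - h'` has self-intersection `-2`.
theorem exists_planarClass_degree_lt :
    ∀ h ∈ planarClasses, h ≠ Pi.single 0 1 → ∃ h' ∈ planarClasses, h' 0 < h 0 ∧ B h h' = 2 := by
  simp only [planarClasses_eq_filter_Icc, Finset.mem_coe]
  decide +kernel

end Enumeration

theorem exists_mem_Wset_apply_eq_of_B_sub_self {x y : Fin 7 → ℤ} (hself : B x x = B y y)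
    (hK : B x K = B y K) (hroot : B (x - y) (x - y) = -2) : ∃ g ∈ Wset, g x = y := by
  have hrefl : IsReflective intersectionForm (x - y) :=
    .of_dvd_two _ (by rw [intersectionForm_apply, hroot, neg_dvd])
  have hfix : intersectionForm (x - y) K = 0 := by
    rw [map_sub, LinearMap.sub_apply, intersectionForm_apply, intersectionForm_apply, hK, sub_self]
  exact ⟨Module.reflection (hrefl.coroot_apply_self intersectionForm),
    ⟨hrefl.isOrthogonal_reflection _ intersectionForm_isSymm,
      reflection_apply_of_apply_eq_zero hrefl hfix⟩,
    reflection_sub_apply_left intersectionForm_isSymm hrefl hself⟩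

theorem exists_mem_Wset_apply_eq_of_B_eq_two {h h' : Fin 7 → ℤ} (hh : h ∈ planarClasses)
    (hh' : h' ∈ planarClasses) (hB : B h h' = 2) : ∃ g ∈ Wset, g h = h' := by
  refine exists_mem_Wset_apply_eq_of_B_sub_self (hh.1.trans hh'.1.symm)
    (hh.2.trans hh'.2.symm) ?_
  calc B (h - h') (h - h') = B h h - 2 * B h h' + B h' h' := by simp only [B, Pi.sub_apply]; ring
    _ = -2 := by rw [hh.1, hh'.1, hB]; norm_num

theorem mem_orbit_of_mem_planarClasses {h : Fin 7 → ℤ} (hh : h ∈ planarClasses) :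
    h ∈ MulAction.orbit weylGroup (Pi.single 0 1 : Fin 7 → ℤ) := by
  induction hd : (h 0).toNat using Nat.strong_induction_on generalizing h with
  | _ d ih =>
    by_cases hne : h = Pi.single 0 1
    · exact hne ▸ MulAction.mem_orbit_self _
    · obtain ⟨h', hh', hlt, hB⟩ := exists_planarClass_degree_lt h hh hne
      obtain ⟨g, hg, rfl⟩ := exists_mem_Wset_apply_eq_of_B_eq_two hh hh' hB
      have hdeg := (degree_mem_Icc_of_mem_planarClasses hh).1
      have horbit := ih _ (by omega) hh' rfl
      rw [← MulAction.orbit_eq_iff] at horbit ⊢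
      exact (MulAction.orbit_smul (⟨g, hg⟩ : weylGroup) h).symm.trans horbit

theorem orbit_single_zero :
    MulAction.orbit weylGroup (Pi.single 0 1 : Fin 7 → ℤ) = planarClasses := by
  refine Set.Subset.antisymm ?_ fun h => mem_orbit_of_mem_planarClasses
  rintro _ ⟨g, rfl⟩
  have hg : g.1 ∈ Wset := g.2
  exact ⟨(hg.1 _ _).trans single_zero_mem_planarClasses.1,
    (congrArg (B _) hg.2.symm).trans ((hg.1 _ _).trans single_zero_mem_planarClasses.2)⟩

section Stabilizer

/-- The automorphism `e₀ ↦ e₀`, `eᵢ ↦ e_{σ i}` of the lattice, for a permutation `σ` of the six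
exceptional classes. -/
def permuteExceptional (σ : Equiv.Perm (Fin 6)) : (Fin 7 → ℤ) ≃ₗ[ℤ] (Fin 7 → ℤ) :=
  LinearEquiv.funCongrLeft ℤ ℤ (Equiv.Perm.decomposeFin.symm (0, σ.symm))

theorem permuteExceptional_apply_zero (σ : Equiv.Perm (Fin 6)) (x : Fin 7 → ℤ) :
    permuteExceptional σ x 0 = x 0 := by
  simp [permuteExceptional, LinearEquiv.funCongrLeft_apply, LinearMap.funLeft_apply]

theorem permuteExceptional_apply_succ (σ : Equiv.Perm (Fin 6)) (x : Fin 7 → ℤ) (i : Fin 6) :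
    permuteExceptional σ x i.succ = x (σ.symm i).succ := by
  simp [permuteExceptional, LinearEquiv.funCongrLeft_apply, LinearMap.funLeft_apply]

theorem permuteExceptional_single_zero (σ : Equiv.Perm (Fin 6)) :
    permuteExceptional σ (Pi.single 0 1) = Pi.single 0 1 := by
  refine funext <| Fin.cases ?_ fun j => ?_
  · rw [permuteExceptional_apply_zero]
  · simp [permuteExceptional_apply_succ]

theorem permuteExceptional_single_succ (σ : Equiv.Perm (Fin 6)) (i : Fin 6) :
    permuteExceptional σ (Pi.single i.succ 1) = Pi.single (σ i).succ 1 := by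
  refine funext <| Fin.cases ?_ fun j => ?_
  · simp [permuteExceptional_apply_zero]
  · simp [permuteExceptional_apply_succ, Pi.single_apply, Equiv.symm_apply_eq]

theorem permuteExceptional_mem_weylGroup (σ : Equiv.Perm (Fin 6)) :
    permuteExceptional σ ∈ weylGroup := by
  refine ⟨fun x y => ?_, funext <| Fin.cases ?_ fun i => ?_⟩
  · simp only [B_eq_sub_sum, permuteExceptional_apply_zero, permuteExceptional_apply_succ]
    rw [Equiv.sum_comp σ.symm fun i => x i.succ * y i.succ]
  · rw [permuteExceptional_apply_zero]
  · rw [permuteExceptional_apply_succ, K_succ, K_succ]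

theorem permuteExceptional_injective : Function.Injective permuteExceptional := by
  refine fun σ τ h => Equiv.ext fun i => single_succ_injective 6 ?_
  have hi := LinearEquiv.congr_fun h (Pi.single i.succ 1)
  rwa [permuteExceptional_single_succ, permuteExceptional_single_succ] at hi

variable {g : (Fin 7 → ℤ) ≃ₗ[ℤ] (Fin 7 → ℤ)}

theorem exists_apply_single_succ_eq (hg : g ∈ Wset)
    (hg0 : g (Pi.single 0 1) = Pi.single 0 1) (i : Fin 6) :
    ∃ j : Fin 6, g (Pi.single i.succ 1) = Pi.single j.succ 1 := by
  set x := g (Pi.single i.succ 1)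
  have hself : B x x = -1 := (hg.1 _ _).trans (B_single_succ_self i)
  have hK : B x K = -1 := by
    calc B x K = B x (g K) := by rw [hg.2]
      _ = -1 := (hg.1 _ _).trans (B_single_succ_K i)
  have hdeg : x 0 = 0 := by
    calc x 0 = B x (Pi.single 0 1) := by simp [B_eq_sub_sum]
      _ = B x (g (Pi.single 0 1)) := by rw [hg0]
      _ = B (Pi.single i.succ 1) (Pi.single 0 1) := hg.1 _ _
      _ = 0 := by simp [B_eq_sub_sum]
  rw [B_eq_sub_sum, hdeg] at hself
  rw [B_K_right, hdeg] at hK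
  obtain ⟨j, hj⟩ := exists_eq_single_of_sum_eq_one_of_sum_sq_eq_one
    (x := fun k : Fin 6 => x k.succ) (by linarith) (by simp only [sq]; linarith)
  refine ⟨j, funext <| Fin.cases ?_ fun k => ?_⟩
  · rw [hdeg, Pi.single_eq_of_ne (Fin.succ_ne_zero j).symm]
  · rw [congrFun hj k]
    simp [Pi.single_apply]

theorem exists_permuteExceptional_eq (hg : g ∈ Wset)
    (hg0 : g (Pi.single 0 1) = Pi.single 0 1) : ∃ σ, permuteExceptional σ = g := by
  choose f hf using exists_apply_single_succ_eq hg hg0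
  have hinj : Function.Injective f := fun i j hij =>
    single_succ_injective 6 (g.injective (by rw [hf, hf, hij]))
  refine ⟨.ofBijective f (Finite.injective_iff_bijective.1 hinj), ?_⟩
  refine LinearEquiv.toLinearMap_injective <| LinearMap.pi_ext' <| Fin.cases ?_ fun i => ?_ <;>
    refine LinearMap.ext_ring ?_
  · exact (permuteExceptional_single_zero _).trans hg0.symm
  · exact (permuteExceptional_single_succ _ i).trans (hf i).symm

theorem card_stabilizer_single_zero :
    Nat.card (MulAction.stabilizer weylGroup (Pi.single 0 1 : Fin 7 → ℤ)) = Nat.factorial 6 := by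
  let toStabilizer (σ : Equiv.Perm (Fin 6)) :
      MulAction.stabilizer weylGroup (Pi.single 0 1 : Fin 7 → ℤ) :=
    ⟨⟨permuteExceptional σ, permuteExceptional_mem_weylGroup σ⟩, permuteExceptional_single_zero σ⟩
  have hinj : Function.Injective toStabilizer := fun σ τ h =>
    permuteExceptional_injective (congrArg (fun g => g.1.1) h)
  have hsurj : Function.Surjective toStabilizer := by
    rintro ⟨⟨g, hg⟩, hg0⟩
    obtain ⟨σ, rfl⟩ := exists_permuteExceptional_eq hg hg0
    exact ⟨σ, rfl⟩
  rw [← Nat.card_eq_of_bijective toStabilizer ⟨hinj, hsurj⟩, Nat.card_perm, Nat.card_fin]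

end Stabilizer

theorem card_weylGroup : Nat.card weylGroup = 51840 := by
  rw [← (MulAction.stabilizer weylGroup (Pi.single 0 1 : Fin 7 → ℤ)).card_mul_index,
    MulAction.index_stabilizer, orbit_single_zero, ncard_planarClasses, card_stabilizer_single_zero]
  decide

/-- The form-preserving automorphisms fixing `K` form a finite group of order 51840
(the Weyl group of the `E₆` lattice). -/
theorem weyl_group_order :
    ∃ W : Subgroup ((Fin 7 → ℤ) ≃ₗ[ℤ] (Fin 7 → ℤ)),
      (W : Set ((Fin 7 → ℤ) ≃ₗ[ℤ] (Fin 7 → ℤ))) = Wset ∧ Finite ↥W ∧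
        Nat.card ↥W = 51840 := by
  refine ⟨weylGroup, rfl, Nat.finite_of_card_ne_zero ?_, card_weylGroup⟩
  rw [card_weylGroup]
  norm_num
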